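/- arXiv:1403.0446 — 2 statements merged into one kernel-verified Lean document; each statement's English description precedes it below -/
import Mathlib

section
/- Let R = ℚ[t₁^{±1}, t₂^{±1}, t₃^{±1}] with the S₃-action permuting the variables, R^a = {P ∈ R : σ·P = ε(σ)P for all σ ∈ S₃}, and R^s the ℚ-linear span of all P ∈ R with τ·P = P for some transposition τ ∈ S₃. Let δ ∈ ℚ[t^{±1}] and let I ⊆ R be the ideal generated by t₁t₂t₃ − 1, δ(t₁), δ(t₂) and δ(t₃). Then I = (I ∩ R^s) ⊕ (I ∩ R^a). -/
open LaurentPolynomial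

set_option synthInstance.maxHeartbeats 1000000
set_option maxHeartbeats 1000000
noncomputable section

/-- The Laurent polynomial ring in three variables over `ℚ`, realized as the monoid algebra
of the additive group `ℤ³`. -/
abbrev R3 : Type := AddMonoidAlgebra ℚ (Fin 3 → ℤ)

/-- The additive automorphism of `ℤ³` permuting the coordinates according to `σ`. -/
def permAddEquiv (σ : Equiv.Perm (Fin 3)) : (Fin 3 → ℤ) ≃+ (Fin 3 → ℤ) :=
  { Equiv.arrowCongr σ (Equiv.refl ℤ) with map_add' := fun _ _ => rfl }

/-- The action of `σ ∈ S₃` on `R3`, permuting the three variables. -/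
def permAct (σ : Equiv.Perm (Fin 3)) : R3 ≃ₐ[ℚ] R3 :=
  AddMonoidAlgebra.domCongr ℚ ℚ (permAddEquiv σ)

/-- The antisymmetric part `R^a`: the subspace of elements `P` with `σ·P = ε(σ)P` for all
`σ ∈ S₃`. -/
def Ra : Submodule ℚ R3 :=
  ⨅ σ : Equiv.Perm (Fin 3),
    LinearMap.ker ((permAct σ).toLinearMap - (Equiv.Perm.sign σ : ℤ) • LinearMap.id)

/-- The subspace `R^s`: the span of the elements fixed by some transposition. -/
def Rs : Submodule ℚ R3 :=
  Submodule.span ℚ { P : R3 | ∃ τ : Equiv.Perm (Fin 3), τ.IsSwap ∧ permAct τ P = P }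

/-- The ring homomorphism `ℚ[t^{±1}] → R3` sending `t` to the `j`-th variable `t_j`. -/
def subst (j : Fin 3) : LaurentPolynomial ℚ →+* R3 :=
  AddMonoidAlgebra.mapDomainRingHom ℚ (AddMonoidHom.single (fun _ : Fin 3 => ℤ) j)

theorem permAct_mul (σ τ : Equiv.Perm (Fin 3)) (P : R3) :
    permAct (σ * τ) P = permAct σ (permAct τ P) := by
  have : (permAct (σ * τ)).toAlgHom = (permAct σ).toAlgHom.comp (permAct τ).toAlgHom := by
    apply AddMonoidAlgebra.algHom_ext
    · intro x
      simp [permAct]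
      rfl
    · exact Subsingleton.elim _ _
  exact DFunLike.congr_fun this P

theorem permAct_one (P : R3) : permAct 1 P = P := by
  have : (permAct 1).toAlgHom = AlgHom.id ℚ R3 := by
    apply AddMonoidAlgebra.algHom_ext
    · intro x
      simp [permAct]
      rfl
    · exact Subsingleton.elim _ _
  exact DFunLike.congr_fun this P

theorem permAct_subst (σ : Equiv.Perm (Fin 3)) (j : Fin 3) (δ : LaurentPolynomial ℚ) :
    permAct σ (subst j δ) = subst (σ j) δ := by
  induction δ using AddMonoidAlgebra.induction_linear with
  | zero => simp
  | add f g hf hg => simp [hf, hg]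
  | single a b =>
    simp only [permAct, subst, AddMonoidAlgebra.mapDomainRingHom_apply,
      AddMonoidAlgebra.mapDomain_single, AddMonoidAlgebra.domCongr_single]
    congr 1
    funext i
    show (Pi.single j a : Fin 3 → ℤ) (σ.symm i) = (Pi.single (σ j) a : Fin 3 → ℤ) i
    simp only [Pi.single_apply, Equiv.symm_apply_eq]

theorem ideal_stable (δ : LaurentPolynomial ℚ) (σ : Equiv.Perm (Fin 3)) (P : R3)
    (hP : P ∈ Ideal.span
      {subst 0 (T 1) * subst 1 (T 1) * subst 2 (T 1) - 1, subst 0 δ, subst 1 δ, subst 2 δ}) :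
    permAct σ P ∈ Ideal.span
      {subst 0 (T 1) * subst 1 (T 1) * subst 2 (T 1) - 1, subst 0 δ, subst 1 δ, subst 2 δ} := by
  have hs : ∀ j, subst j δ ∈ Ideal.span
      {subst 0 (T 1) * subst 1 (T 1) * subst 2 (T 1) - 1, subst 0 δ, subst 1 δ, subst 2 δ} := by
    intro j
    apply Ideal.subset_span
    fin_cases j <;> simp
  refine (Ideal.span_le (I := Ideal.comap (permAct σ) (Ideal.span _))).2 ?_ hP
  rintro x (rfl | rfl | rfl | rfl)
  · show permAct σ _ ∈ Ideal.span _
    apply Ideal.subset_span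
    left
    have := Equiv.prod_comp σ (fun j => subst j (T 1))
    simp only [Fin.prod_univ_three] at this
    simp only [map_sub, map_mul, permAct_subst, this, map_one]
  all_goals
    show permAct σ _ ∈ Ideal.span _
    rw [permAct_subst]
    exact hs _

/-- The antisymmetrizer. -/
def asym : R3 →ₗ[ℚ] R3 :=
  ∑ σ : Equiv.Perm (Fin 3), (Equiv.Perm.sign σ : ℤ) • (permAct σ).toLinearMap

theorem asym_apply (P : R3) :
    asym P = ∑ σ : Equiv.Perm (Fin 3), (Equiv.Perm.sign σ : ℤ) • permAct σ P := by
  simp [asym, LinearMap.sum_apply]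

theorem mem_Ra (P : R3) : P ∈ Ra ↔
    ∀ σ : Equiv.Perm (Fin 3), permAct σ P = (Equiv.Perm.sign σ : ℤ) • P := by
  simp [Ra, Submodule.mem_iInf, LinearMap.mem_ker, sub_eq_zero]

theorem sign_sq (σ : Equiv.Perm (Fin 3)) :
    (Equiv.Perm.sign σ : ℤ) * (Equiv.Perm.sign σ : ℤ) = 1 := by
  rw [← Units.val_mul, Int.units_mul_self, Units.val_one]

theorem asym_mem_Ra (P : R3) : asym P ∈ Ra := by
  rw [mem_Ra]
  intro σ
  rw [asym_apply, map_sum, Finset.smul_sum, ← Equiv.sum_comp (Equiv.mulLeft σ)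
    (fun τ => (Equiv.Perm.sign σ : ℤ) • (Equiv.Perm.sign τ : ℤ) • permAct τ P)]
  refine Finset.sum_congr rfl fun τ _ => ?_
  rw [map_zsmul, Equiv.coe_mulLeft, permAct_mul, smul_smul, Equiv.Perm.sign_mul, Units.val_mul,
    ← mul_assoc, sign_sq, one_mul]

theorem asym_Ra (P : R3) (h : P ∈ Ra) : asym P = (6 : ℚ) • P := by
  rw [mem_Ra] at h
  rw [asym_apply]
  simp only [h, smul_smul, sign_sq, one_smul]
  rw [Finset.sum_const, Finset.card_univ,
          Fintype.card_perm, Fintype.card_fin, ← Nat.cast_smul_eq_nsmul ℚ]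
  norm_num [Nat.factorial]

theorem asym_Rs (P : R3) (h : P ∈ Rs) : asym P = 0 := by
  have : Rs ≤ LinearMap.ker asym := by
    refine Submodule.span_le.2 ?_
    rintro Q ⟨τ, hτ, hQ⟩
    show asym Q = 0
    have h1 : asym Q = - asym Q := by
      conv_lhs => rw [asym_apply, ← Equiv.sum_comp (Equiv.mulRight τ)]
      rw [asym_apply, ← Finset.sum_neg_distrib]
      refine Finset.sum_congr rfl fun σ _ => ?_
      rw [Equiv.coe_mulRight, permAct_mul, hQ, Equiv.Perm.sign_mul, hτ.sign_eq]
      simp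
    have h2 : (2 : ℚ) • asym Q = 0 := by
      rw [two_smul]
      nth_rewrite 1 [h1]
      simp
    simpa using h2
  exact this h

theorem sub_mem_Rs (σ : Equiv.Perm (Fin 3)) (P : R3) :
    P - (Equiv.Perm.sign σ : ℤ) • permAct σ P ∈ Rs := by
  induction σ using Equiv.Perm.swap_induction_on' with
  | one => simp [permAct_one]
  | mul_swap f x y hxy ih =>
    have e : P - (Equiv.Perm.sign (f * Equiv.swap x y) : ℤ) • permAct (f * Equiv.swap x y) P =
        (P - (Equiv.Perm.sign f : ℤ) • permAct f P) +
        (Equiv.Perm.sign f : ℤ) • permAct f (P + permAct (Equiv.swap x y) P) := by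
      rw [Equiv.Perm.sign_mul, Equiv.Perm.sign_swap hxy, permAct_mul, map_add, smul_add]
      simp
      abel
    rw [e]
    refine Submodule.add_mem _ ih (zsmul_mem (Submodule.subset_span ?_) _)
    refine ⟨f * Equiv.swap x y * f⁻¹, ⟨f x, f y, f.injective.ne hxy, ?_⟩, ?_⟩
    · rw [Equiv.swap_apply_apply]
    · rw [← permAct_mul, inv_mul_cancel_right, permAct_mul, map_add, ← permAct_mul (Equiv.swap x y),
        Equiv.swap_mul_self, permAct_one, add_comm]

theorem stmt12 (δ : LaurentPolynomial ℚ) :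
    let I : Ideal R3 := Ideal.span
      {subst 0 (T 1) * subst 1 (T 1) * subst 2 (T 1) - 1, subst 0 δ, subst 1 δ, subst 2 δ}
    ((I.restrictScalars ℚ ⊓ Rs) ⊓ (I.restrictScalars ℚ ⊓ Ra) = ⊥) ∧
      (I.restrictScalars ℚ ⊓ Rs) ⊔ (I.restrictScalars ℚ ⊓ Ra) = I.restrictScalars ℚ := by
  intro I
  have hI : ∀ σ : Equiv.Perm (Fin 3), ∀ P ∈ I, permAct σ P ∈ I := fun σ P hP => ideal_stable δ σ P hP
  constructor
  · rw [eq_bot_iff]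
    rintro P ⟨⟨-, hs⟩, ⟨-, ha⟩⟩
    have h1 := asym_Rs P hs
    rw [asym_Ra P ha] at h1
    simpa using h1
  · apply le_antisymm
    · exact sup_le inf_le_left inf_le_left
    · intro P hP
      have hP' : P ∈ I := hP
      have hA : (6 : ℚ)⁻¹ • asym P ∈ I.restrictScalars ℚ := by
        apply Submodule.smul_mem
        rw [asym_apply]
        refine Submodule.sum_mem _ fun σ _ => ?_
        exact zsmul_mem (show permAct σ P ∈ I.restrictScalars ℚ from hI σ P hP') _
      have e : P = (P - (6 : ℚ)⁻¹ • asym P) + (6 : ℚ)⁻¹ • asym P := by abel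
      rw [e]
      refine Submodule.add_mem_sup ⟨Submodule.sub_mem _ hP hA, ?_⟩
        ⟨hA, Submodule.smul_mem _ _ (asym_mem_Ra P)⟩
      have e2 : P - (6 : ℚ)⁻¹ • asym P =
          (6 : ℚ)⁻¹ • ∑ σ : Equiv.Perm (Fin 3), (P - (Equiv.Perm.sign σ : ℤ) • permAct σ P) := by
        rw [Finset.sum_sub_distrib, ← asym_apply, smul_sub, Finset.sum_const, Finset.card_univ,
          Fintype.card_perm, Fintype.card_fin, ← Nat.cast_smul_eq_nsmul ℚ, smul_smul]
        norm_num [Nat.factorial]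
      show P - (6 : ℚ)⁻¹ • asym P ∈ Rs
      rw [e2]
      exact Submodule.smul_mem _ _ (Submodule.sum_mem _ fun σ _ => sub_mem_Rs σ P)
end
end

section
/- Let z ∈ ℂ be a primitive cube root of unity (z³ = 1, z ≠ 1). For an integer m ≥ 1 set A_m = ℂ[t^{±1}]/((t − z)^m) and V_m = (A_m ⊗_ℂ A_m ⊗_ℂ A_m)/H. Then dim_ℂ V_m = 3 if m = 2, dim_ℂ V_m = 7 if m = 3, and dim_ℂ V_m = 12 if m = 4. -/
open LaurentPolynomial TensorProduct

set_option synthInstance.maxHeartbeats 1000000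
set_option maxHeartbeats 1000000
noncomputable section

abbrev LQuot (K : Type) [Field K] (p : LaurentPolynomial K) : Type :=
  LaurentPolynomial K ⧸ Ideal.span {p}

/-- The class of a Laurent polynomial in the quotient by `(p)`. -/
def clsOf (K : Type) [Field K] (p x : LaurentPolynomial K) : LQuot K p :=
  Ideal.Quotient.mk (Ideal.span {p}) x

abbrev Trip (K : Type) [Field K] (p q r : LaurentPolynomial K) : Type :=
  (LQuot K p ⊗[K] LQuot K q) ⊗[K] LQuot K r

/-- The holonomy subspace: the `K`-span of the elements
`β₁ ⊗ β₂ ⊗ β₃ - tβ₁ ⊗ tβ₂ ⊗ tβ₃`. -/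
def holSub (K : Type) [Field K] (p q r : LaurentPolynomial K) :
    Submodule K (Trip K p q r) :=
  Submodule.span K { x | ∃ (a : LQuot K p) (b : LQuot K q) (c : LQuot K r),
    x = (a ⊗ₜ[K] b) ⊗ₜ[K] c -
      (((T 1 : LaurentPolynomial K) • a) ⊗ₜ[K] ((T 1 : LaurentPolynomial K) • b)) ⊗ₜ[K]
        ((T 1 : LaurentPolynomial K) • c) }

instance (K : Type) [Field K] (p q r : LaurentPolynomial K) : AddCommGroup (Trip K p q r) :=
  TensorProduct.addCommGroup

/-- `V_m`: the quotient of `A_m ⊗ A_m ⊗ A_m` by the holonomy subspace, for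
`A_m = ℂ[t^{±1}]/((t-z)^m)`. -/
abbrev Vq (z : ℂ) (m : ℕ) : Type :=
  Trip ℂ ((T 1 - C z) ^ m) ((T 1 - C z) ^ m) ((T 1 - C z) ^ m) ⧸
    holSub ℂ ((T 1 - C z) ^ m) ((T 1 - C z) ^ m) ((T 1 - C z) ^ m)


abbrev Tr (A : Type) [CommRing A] [Algebra ℂ A] : Type := (A ⊗[ℂ] A) ⊗[ℂ] A

def hol (A : Type) [CommRing A] [Algebra ℂ A] (t : A) : Submodule ℂ (Tr A) :=
  Submodule.span ℂ { x | ∃ (a b c : A),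
    x = (a ⊗ₜ[ℂ] b) ⊗ₜ[ℂ] c - ((t * a) ⊗ₜ[ℂ] (t * b)) ⊗ₜ[ℂ] (t * c) }

def tauR (A : Type) [CommRing A] [Algebra ℂ A] (t : A) : Tr A := (t ⊗ₜ[ℂ] t) ⊗ₜ[ℂ] t

def Qr (A : Type) [CommRing A] [Algebra ℂ A] (t : A) : Type :=
  Tr A ⧸ Ideal.span {1 - tauR A t}

instance (A : Type) [CommRing A] [Algebra ℂ A] (t : A) : CommRing (Qr A t) :=
  inferInstanceAs (CommRing (Tr A ⧸ Ideal.span {1 - tauR A t}))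

instance (A : Type) [CommRing A] [Algebra ℂ A] (t : A) : Algebra ℂ (Qr A t) :=
  inferInstanceAs (Algebra ℂ (Tr A ⧸ Ideal.span {1 - tauR A t}))

def qmk (A : Type) [CommRing A] [Algebra ℂ A] (t : A) : Tr A →ₐ[ℂ] Qr A t :=
  Ideal.Quotient.mkₐ ℂ (Ideal.span {1 - tauR A t})

theorem qmk_surj (A : Type) [CommRing A] [Algebra ℂ A] (t : A) :
    Function.Surjective (qmk A t) := Ideal.Quotient.mk_surjective

theorem qmk_tau (A : Type) [CommRing A] [Algebra ℂ A] (t : A) :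
    qmk A t (tauR A t) = 1 := by
  rw [← map_one (qmk A t)]
  exact (Ideal.Quotient.eq.2 (Ideal.mem_span_singleton_self _)).symm

section maps
variable {A : Type} [CommRing A] [Algebra ℂ A] (t : A)

theorem tau_mul (a b c : A) :
    (1 - tauR A t) * ((a ⊗ₜ[ℂ] b) ⊗ₜ[ℂ] c) = (a ⊗ₜ[ℂ] b) ⊗ₜ[ℂ] c -
      ((t * a) ⊗ₜ[ℂ] (t * b)) ⊗ₜ[ℂ] (t * c) := by
  rw [sub_mul, one_mul, tauR, Algebra.TensorProduct.tmul_mul_tmul,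
    Algebra.TensorProduct.tmul_mul_tmul]

theorem hol_eq : hol A t = (Ideal.span {1 - tauR A t}).restrictScalars ℂ := by
  apply le_antisymm
  · refine Submodule.span_le.2 ?_
    rintro x ⟨a, b, c, rfl⟩
    rw [← tau_mul]
    exact Ideal.mul_mem_right _ _ (Ideal.mem_span_singleton_self _)
  · intro x hx
    obtain ⟨r, rfl⟩ := Ideal.mem_span_singleton'.1 hx
    clear hx
    rw [mul_comm]
    induction r using TensorProduct.induction_on with
    | zero => rw [mul_zero]; exact Submodule.zero_mem _
    | add u v hu hv =>
      rw [mul_add]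
      exact Submodule.add_mem _ hu hv
    | tmul u c =>
      induction u using TensorProduct.induction_on with
      | zero => rw [TensorProduct.zero_tmul, mul_zero]; exact Submodule.zero_mem _
      | add u v hu hv =>
        rw [TensorProduct.add_tmul, mul_add]
        exact Submodule.add_mem _ hu hv
      | tmul a b =>
        rw [tau_mul]
        exact Submodule.subset_span ⟨a, b, c, rfl⟩

theorem finrank_hol : Module.finrank ℂ (Tr A ⧸ hol A t) = Module.finrank ℂ (Qr A t) :=
  ((Submodule.quotEquivOfEq _ _ (hol_eq t)).trans
    (Submodule.Quotient.restrictScalarsEquiv ℂ (Ideal.span {1 - tauR A t}))).finrank_eq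

def i1 : A →ₐ[ℂ] Qr A t :=
  (qmk A t).comp
    (Algebra.TensorProduct.includeLeft.comp Algebra.TensorProduct.includeLeft)
def i2 : A →ₐ[ℂ] Qr A t :=
  (qmk A t).comp
    (Algebra.TensorProduct.includeLeft.comp Algebra.TensorProduct.includeRight)
def i3 : A →ₐ[ℂ] Qr A t :=
  (qmk A t).comp Algebra.TensorProduct.includeRight

theorem i_mul (a b c : A) :
    i1 t a * i2 t b * i3 t c = qmk A t ((a ⊗ₜ[ℂ] b) ⊗ₜ[ℂ] c) := by
  change qmk A t _ * qmk A t _ * qmk A t _ = _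
  rw [← map_mul, ← map_mul]
  simp

variable (z : ℂ) (hz3 : z ^ 3 = 1) (n : A) (ht : t = z • (1 + n))

theorem rel (hz3 : z ^ 3 = 1) (ht : t = z • (1 + n)) :
    (1 + i1 t n) * (1 + i2 t n) * (1 + i3 t n) = 1 := by
  have h := i_mul t t t t
  have e : ∀ f : A →ₐ[ℂ] Qr A t, f t = z • (1 + f n) := by
    intro f
    have := congrArg f ht
    rwa [map_smul, map_add, map_one] at this
  rw [e, e, e] at h
  rw [smul_mul_smul_comm, smul_mul_smul_comm, ← pow_two, ← pow_succ, hz3, one_smul] at h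
  rw [h]
  exact qmk_tau A t

/-- Closure property: subspaces of `A`-algebras stable under `n` and the inverse of `1 + n`
are stable under `A`. -/
def Gen (A : Type) [CommRing A] [Algebra ℂ A] (n : A) : Prop :=
  ∀ (Q : Type) [CommRing Q] [Algebra ℂ Q] (f : A →ₐ[ℂ] Q) (M : Submodule ℂ Q) (u : Q)
    (_ : (1 + f n) * u = 1)
    (_ : ∀ q ∈ M, f n * q ∈ M) (_ : ∀ q ∈ M, u * q ∈ M) (a : A), ∀ q ∈ M, f a * q ∈ M

/-- Universal property. -/
def Univ (A : Type) [CommRing A] [Algebra ℂ A] (n : A) (m : ℕ) : Prop :=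
  ∀ (S : Type) [CommRing S] [Algebra ℂ S] (x u : S)
    (_ : x ^ m = 0) (_ : (1 + x) * u = 1), ∃ f : A →ₐ[ℂ] S, f n = x

theorem eq_top (hz3 : z ^ 3 = 1) (ht : t = z • (1 + n)) (hG : Gen A n)
    (M : Submodule ℂ (Qr A t)) (h0 : 1 ∈ M)
    (h1 : ∀ q ∈ M, i1 t n * q ∈ M)
    (h2 : ∀ q ∈ M, i2 t n * q ∈ M)
    (h3 : ∀ q ∈ M, i3 t n * q ∈ M) : M = ⊤ := by
  have R := rel t z n hz3 ht
  set x := i1 t n with hx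
  set y := i2 t n with hy
  set w := i3 t n with hw
  have P : ∀ u v : Qr A t, (∀ q ∈ M, u * q ∈ M) → (∀ q ∈ M, v * q ∈ M) →
      ∀ q ∈ M, ((1 + u) * (1 + v)) * q ∈ M := by
    intro u v hu hv q hq
    have e : ((1 + u) * (1 + v)) * q = q + v * q + u * (q + v * q) := by ring
    have := M.add_mem hq (hv q hq)
    rw [e]
    exact M.add_mem this (hu _ this)
  have s1 := hG _ (i1 t) M ((1 + y) * (1 + w)) (by linear_combination R) h1 (P _ _ h2 h3)
  have s2 := hG _ (i2 t) M ((1 + x) * (1 + w)) (by linear_combination R) h2 (P _ _ h1 h3)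
  have s3 := hG _ (i3 t) M ((1 + x) * (1 + y)) (by linear_combination R) h3 (P _ _ h1 h2)
  rw [eq_top_iff]
  rintro q -
  obtain ⟨r, rfl⟩ := qmk_surj A t q
  induction r using TensorProduct.induction_on with
  | zero => rw [map_zero]; exact M.zero_mem
  | add u v hu hv => rw [map_add]; exact M.add_mem hu hv
  | tmul u c =>
    induction u using TensorProduct.induction_on with
    | zero => rw [TensorProduct.zero_tmul, map_zero]; exact M.zero_mem
    | add u v hu hv => rw [TensorProduct.add_tmul, map_add]; exact M.add_mem hu hv
    | tmul a b =>
      rw [← i_mul]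
      have := s1 a _ (s2 b _ (s3 c _ h0))
      rwa [mul_one, ← mul_assoc] at this

theorem exists_hom (hz3 : z ^ 3 = 1) (ht : t = z • (1 + n)) (m : ℕ) (hU : Univ A n m)
    {S : Type} [CommRing S] [Algebra ℂ S] (x y w : S)
    (hx : x ^ m = 0) (hy : y ^ m = 0) (hw : w ^ m = 0)
    (h : (1 + x) * (1 + y) * (1 + w) = 1) :
    ∃ f : Qr A t →ₐ[ℂ] S, f (i1 t n) = x ∧ f (i2 t n) = y := by
  obtain ⟨f1, h1⟩ := hU S x ((1 + y) * (1 + w)) hx (by linear_combination h)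
  obtain ⟨f2, h2⟩ := hU S y ((1 + x) * (1 + w)) hy (by linear_combination h)
  obtain ⟨f3, h3⟩ := hU S w ((1 + x) * (1 + y)) hw (by linear_combination h)
  let F : Tr A →ₐ[ℂ] S :=
    Algebra.TensorProduct.lift (Algebra.TensorProduct.lift f1 f2 fun _ _ => Commute.all _ _) f3
      fun _ _ => Commute.all _ _
  have Ft : ∀ a b c, F ((a ⊗ₜ[ℂ] b) ⊗ₜ[ℂ] c) = f1 a * f2 b * f3 c := by
    intro a b c
    simp [F]
  refine ⟨Ideal.Quotient.liftₐ _ F ?_, ?_, ?_⟩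
  · intro a ha
    obtain ⟨r, rfl⟩ := Ideal.mem_span_singleton'.1 ha
    rw [map_mul, map_sub, map_one, tauR, Ft, ht]
    simp only [map_smul, map_add, map_one, h1, h2, h3]
    rw [smul_mul_smul_comm, smul_mul_smul_comm, ← pow_two, ← pow_succ, hz3, one_smul, h,
      sub_self, mul_zero]
  · change F ((n ⊗ₜ[ℂ] 1) ⊗ₜ[ℂ] 1) = x
    rw [Ft, h1]; simp
  · change F ((1 ⊗ₜ[ℂ] n) ⊗ₜ[ℂ] 1) = y
    rw [Ft, h2]; simp

end maps

section laurent
variable (z : ℂ) (m : ℕ)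

theorem finrank_Vq : Module.finrank ℂ (Vq z m) = Module.finrank ℂ
    (Tr (LQuot ℂ ((T 1 - C z) ^ m)) ⧸ hol (LQuot ℂ ((T 1 - C z) ^ m)) (clsOf ℂ _ (T 1))) := by
  rfl

/-- The nilpotent generator of `A_m`. -/
def nil : LQuot ℂ ((T 1 - C z) ^ m) := z⁻¹ • (clsOf ℂ _ (T 1 - C z))

theorem nil_pow : nil z m ^ m = 0 := by
  rw [nil, smul_pow, clsOf, ← map_pow,
    Ideal.Quotient.eq_zero_iff_mem.2 (Ideal.mem_span_singleton_self _), smul_zero]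

theorem cls_T (hz : z ≠ 0) : clsOf ℂ ((T 1 - C z) ^ m) (T 1) = z • (1 + nil z m) := by
  have h : clsOf ℂ ((T 1 - C z) ^ m) (C z) = z • 1 := by
    rw [← Algebra.algebraMap_eq_smul_one]; rfl
  have h2 : clsOf ℂ ((T 1 - C z) ^ m) (T 1 - C z) = clsOf ℂ _ (T 1) - clsOf ℂ _ (C z) :=
    map_sub _ _ _
  rw [nil, h2, h, smul_add, smul_smul, mul_inv_cancel₀ hz, one_smul]
  abel

/-- A subspace stable under multiplication by `n` is stable under the image of `A_m`. -/
theorem stable {Q : Type} [CommRing Q] [Algebra ℂ Q] (hz : z ≠ 0)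
    (f : LQuot ℂ ((T 1 - C z) ^ m) →ₐ[ℂ] Q) (M : Submodule ℂ Q) (u : Q)
    (hu : (1 + f (nil z m)) * u = 1)
    (h1 : ∀ q ∈ M, f (nil z m) * q ∈ M) (h2 : ∀ q ∈ M, u * q ∈ M)
    (a : LQuot ℂ ((T 1 - C z) ^ m)) : ∀ q ∈ M, f a * q ∈ M := by
  obtain ⟨p, rfl⟩ := Ideal.Quotient.mk_surjective a
  have hT : f (Ideal.Quotient.mk _ (T 1)) = z • (1 + f (nil z m)) := by
    have := congrArg f (cls_T z m hz)
    simp only [map_smul, map_add, map_one] at this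
    exact this
  have hTi : f (Ideal.Quotient.mk _ (T (-1))) = z⁻¹ • u := by
    have e : f (Ideal.Quotient.mk _ (T (-1))) * f (Ideal.Quotient.mk _ (T 1)) = 1 := by
      rw [← map_mul, ← map_mul, ← T_add]; simp
    calc f (Ideal.Quotient.mk _ (T (-1)))
        = f (Ideal.Quotient.mk _ (T (-1))) * (z⁻¹ • z • ((1 + f (nil z m)) * u)) := by
          rw [smul_smul, inv_mul_cancel₀ hz, one_smul, hu, mul_one]
      _ = (f (Ideal.Quotient.mk _ (T (-1))) * f (Ideal.Quotient.mk _ (T 1))) * (z⁻¹ • u) := by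
          rw [hT]; simp only [Algebra.smul_def]; ring
      _ = _ := by rw [e, one_mul]
  induction p using LaurentPolynomial.induction_on' with
  | add p q hp hq =>
    intro r hr
    rw [map_add, map_add, add_mul]
    exact M.add_mem (hp r hr) (hq r hr)
  | C_mul_T n c =>
    have hn : ∀ q ∈ M, f (Ideal.Quotient.mk _ (T n)) * q ∈ M := by
      induction n using Int.induction_on with
      | zero => intro q hq; simpa using hq
      | succ k ih =>
        intro q hq
        rw [T_add, map_mul, map_mul, mul_assoc, hT, smul_mul_assoc, add_mul, one_mul]
        exact ih _ (M.smul_mem _ (M.add_mem hq (h1 q hq)))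
      | pred k ih =>
        intro q hq
        rw [show (-(k : ℤ) - 1) = -(k : ℤ) + -1 from sub_eq_add_neg _ _, T_add, map_mul, map_mul, mul_assoc, hTi, smul_mul_assoc]
        exact ih _ (M.smul_mem _ (h2 q hq))
    intro q hq
    have hc : f (Ideal.Quotient.mk _ (C c)) = c • 1 := by
      rw [← Algebra.algebraMap_eq_smul_one, ← f.commutes c]; rfl
    rw [map_mul, map_mul, hc, smul_mul_assoc, one_mul, smul_mul_assoc]
    exact M.smul_mem _ (hn q hq)

/-- The universal property of `A_m`. -/
theorem exists_lift {S : Type} [CommRing S] [Algebra ℂ S] (hz : z ≠ 0) (x u : S)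
    (hx : x ^ m = 0) (hu : (1 + x) * u = 1) :
    ∃ f : LQuot ℂ ((T 1 - C z) ^ m) →ₐ[ℂ] S, f (nil z m) = x := by
  let un : Sˣ := ⟨z • (1 + x), z⁻¹ • u,
    by rw [smul_mul_smul_comm, mul_inv_cancel₀ hz, one_smul, hu],
    by rw [smul_mul_smul_comm, inv_mul_cancel₀ hz, one_smul, mul_comm, hu]⟩
  let g : LaurentPolynomial ℂ →ₐ[ℂ] S :=
    AddMonoidAlgebra.lift ℂ S ℤ ((Units.coeHom S).comp (zpowersHom Sˣ un))
  have gT : g (T 1) = z • (1 + x) := by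
    change AddMonoidAlgebra.lift ℂ S ℤ _ (AddMonoidAlgebra.single 1 1) = _
    rw [AddMonoidAlgebra.lift_single]
    simp [un]
  have gC : g (C z) = z • 1 := by
    rw [← Algebra.algebraMap_eq_smul_one, ← g.commutes z]; rfl
  have g1 : g (T 1 - C z) = z • x := by rw [map_sub, gT, gC, smul_add]; abel
  refine ⟨Ideal.Quotient.liftₐ _ g ?_, ?_⟩
  · intro a ha
    obtain ⟨r, rfl⟩ := Ideal.mem_span_singleton'.1 ha
    rw [map_mul, map_pow, g1, smul_pow, hx, smul_zero, mul_zero]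
  · rw [nil, map_smul]
    change z⁻¹ • g (T 1 - C z) = x
    rw [g1, smul_smul, inv_mul_cancel₀ hz, one_smul]

theorem gen (hz : z ≠ 0) : Gen (LQuot ℂ ((T 1 - C z) ^ m)) (nil z m) :=
  fun _ _ _ f M u hu h1 h2 a => stable z m hz f M u hu h1 h2 a

theorem univ (hz : z ≠ 0) : Univ (LQuot ℂ ((T 1 - C z) ^ m)) (nil z m) m :=
  fun _ _ _ x u hx hu => exists_lift z m hz x u hx hu

end laurent

theorem cancel_nat {Q : Type} [CommRing Q] [Algebra ℂ Q] (k : ℕ) (hk : k ≠ 0) (a : Q)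
    (h : (k : Q) * a = 0) : a = 0 := by
  have e : algebraMap ℂ Q ((k : ℂ)⁻¹) * (k : Q) = 1 := by
    rw [← map_natCast (algebraMap ℂ Q), ← map_mul, inv_mul_cancel₀ (Nat.cast_ne_zero.2 hk),
      map_one]
  calc a = (algebraMap ℂ Q ((k : ℂ)⁻¹) * (k : Q)) * a := by rw [e, one_mul]
    _ = algebraMap ℂ Q ((k : ℂ)⁻¹) * ((k : Q) * a) := by ring
    _ = 0 := by rw [h, mul_zero]

theorem E_zero {Q : Type} [CommRing Q] (m : ℕ) (x y w : Q) (hw : w ^ m = 0)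
    (h : (1 + x) * (1 + y) * (1 + w) = 1) : (x + y + x * y) ^ m = 0 := by
  have e : x + y + x * y = w * (-(1 + x) * (1 + y)) := by linear_combination h
  rw [e, mul_pow, hw, zero_mul]

theorem w_zero {Q : Type} [CommRing Q] (m : ℕ) (x y u : Q) (hE : (x + y + x * y) ^ m = 0)
    (h : (1 + x) * (1 + y) * u = 1) : (u - 1) ^ m = 0 := by
  have e : u - 1 = (x + y + x * y) * (-u) := by linear_combination h
  rw [e, mul_pow, hE, zero_mul]

theorem exists_unit_inv {Q : Type} [CommRing Q] (m : ℕ) (x y : Q) (hx : x ^ m = 0)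
    (hy : y ^ m = 0) : ∃ u, (1 + x) * (1 + y) * u = 1 := by
  have h1 : IsUnit (1 + x) := IsNilpotent.isUnit_one_add ⟨m, hx⟩
  have h2 : IsUnit (1 + y) := IsNilpotent.isUnit_one_add ⟨m, hy⟩
  exact (h1.mul h2).exists_right_inv

theorem mats (d : ℕ) (X Y : Matrix (Fin d) (Fin d) ℤ) (hXY : X * Y = Y * X) :
    ∃ (S : Type) (_ : CommRing S) (_ : Algebra ℂ S) (x y : S)
      (φ : S →ₐ[ℂ] Matrix (Fin d) (Fin d) ℂ), Function.Injective φ ∧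
      φ x = (Int.castRingHom ℂ).mapMatrix X ∧ φ y = (Int.castRingHom ℂ).mapMatrix Y := by
  let s : Set (Matrix (Fin d) (Fin d) ℂ) :=
    {(Int.castRingHom ℂ).mapMatrix X, (Int.castRingHom ℂ).mapMatrix Y}
  have hs : ∀ a ∈ s, ∀ b ∈ s, a * b = b * a := by
    have := congrArg (Int.castRingHom ℂ).mapMatrix hXY
    rw [map_mul, map_mul] at this
    rintro a (rfl | rfl) b (rfl | rfl)
    · rfl
    · exact this
    · exact this.symm
    · rfl
  letI : CommRing (Algebra.adjoin ℂ s) := Algebra.adjoinCommRingOfComm ℂ hs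
  exact ⟨Algebra.adjoin ℂ s, inferInstance, inferInstance,
    ⟨_, Algebra.subset_adjoin (Or.inl rfl)⟩, ⟨_, Algebra.subset_adjoin (Or.inr rfl)⟩,
    (Algebra.adjoin ℂ s).val, Subtype.val_injective, rfl, rfl⟩

theorem finrank_of_bas {Q S : Type} [CommRing Q] [Algebra ℂ Q] [CommRing S] [Algebra ℂ S]
    (d : ℕ) (b : Fin (d + 1) → Q) (htop : Submodule.span ℂ (Set.range b) = ⊤)
    (f : Q →ₐ[ℂ] S) (φ : S →ₐ[ℂ] Matrix (Fin (d + 1)) (Fin (d + 1)) ℂ)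
    (bZ : Fin (d + 1) → Matrix (Fin (d + 1)) (Fin (d + 1)) ℤ)
    (hb : ∀ i, φ (f (b i)) = (Int.castRingHom ℂ).mapMatrix (bZ i))
    (hZ : ∀ i j, bZ i j 0 = if j = i then 1 else 0) : Module.finrank ℂ Q = d + 1 := by
  let L : Q →ₗ[ℂ] (Fin (d + 1) → ℂ) :=
    { toFun := fun q j => φ (f q) j 0
      map_add' := fun p q => by ext j; simp
      map_smul' := fun c q => by ext j; simp }
  have hL : ∀ i, L (b i) = Pi.single i 1 := by
    intro i
    ext j
    change φ (f (b i)) j 0 = _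
    rw [hb, RingHom.mapMatrix_apply, Matrix.map_apply, hZ, Pi.single_apply]
    split_ifs <;> simp
  have li : LinearIndependent ℂ b := by
    apply LinearIndependent.of_comp L
    have : (L ∘ b) = fun i => Pi.single i (1 : ℂ) := funext hL
    rw [this]
    exact Pi.linearIndependent_single_one (Fin (d + 1)) ℂ
  have := finrank_span_eq_card li
  rw [htop, finrank_top, Fintype.card_fin] at this
  exact this

theorem span_stable {Q : Type} [CommRing Q] [Algebra ℂ Q] {ι : Type} (b : ι → Q) (x : Q)
    (h : ∀ i, x * b i ∈ Submodule.span ℂ (Set.range b)) :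
    ∀ q ∈ Submodule.span ℂ (Set.range b), x * q ∈ Submodule.span ℂ (Set.range b) := by
  intro q hq
  induction hq using Submodule.span_induction with
  | mem q hq => obtain ⟨i, rfl⟩ := hq; exact h i
  | zero => rw [mul_zero]; exact Submodule.zero_mem _
  | add p q _ _ hp hq => rw [mul_add]; exact Submodule.add_mem _ hp hq
  | smul c q _ hq => rw [mul_smul_comm]; exact Submodule.smul_mem _ _ hq

/-- Stability under the inverse of `1 + x` for nilpotent `x`. -/
theorem inv_stable {Q : Type} [CommRing Q] [Algebra ℂ Q] (M : Submodule ℂ Q) (m : ℕ) (x : Q)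
    (hx : x ^ m = 0) (h : ∀ q ∈ M, x * q ∈ M) (p : Q) (hp : (1 + x) * p ∈ M) : p ∈ M := by
  have key : ∀ k : ℕ, p - (-x) ^ k * p ∈ M := by
    intro k
    induction k with
    | zero => simp
    | succ k ih =>
      have hk : ∀ j : ℕ, ∀ q ∈ M, (-x) ^ j * q ∈ M := by
        intro j
        induction j with
        | zero => intro q hq; simpa using hq
        | succ j ihj =>
          intro q hq
          rw [pow_succ, mul_assoc]
          refine ihj _ ?_
          rw [neg_mul]
          exact M.neg_mem (h q hq)
      have e : p - (-x) ^ (k + 1) * p = (p - (-x) ^ k * p) + (-x) ^ k * ((1 + x) * p) := by ring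
      rw [e]
      exact M.add_mem ih (hk k _ hp)
  have := key m
  rwa [neg_pow, hx, mul_zero, zero_mul, sub_zero] at this

theorem w_stable {Q : Type} [CommRing Q] [Algebra ℂ Q] (M : Submodule ℂ Q) (m : ℕ) (x y w : Q)
    (hx : x ^ m = 0) (hy : y ^ m = 0) (h : (1 + x) * (1 + y) * (1 + w) = 1)
    (h1 : ∀ q ∈ M, x * q ∈ M) (h2 : ∀ q ∈ M, y * q ∈ M) : ∀ q ∈ M, w * q ∈ M := by
  intro q hq
  have : (1 + w) * q ∈ M := by
    refine inv_stable M m y hy h2 _ (inv_stable M m x hx h1 _ ?_)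
    have e : (1 + x) * ((1 + y) * ((1 + w) * q)) = q := by linear_combination q * h
    rwa [e]
  have e : w * q = (1 + w) * q - q := by ring
  rw [e]
  exact M.sub_mem this hq

def bas2 {R : Type} [Ring R] (x y : R) : Fin 3 → R :=
  ![1, x, y]

theorem bas2_map {R R' : Type} [Ring R] [Ring R'] (f : R →+* R') (x y : R) (i : Fin 3) :
    f (bas2 x y i) = bas2 (f x) (f y) i := by
  fin_cases i <;> simp [bas2]

def X2 : Matrix (Fin 3) (Fin 3) ℤ :=
  !![0, 0, 0;
     1, 0, 0;
     0, 0, 0]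

def Y2 : Matrix (Fin 3) (Fin 3) ℤ :=
  !![0, 0, 0;
     0, 0, 0;
     1, 0, 0]

theorem comm2 : X2 * Y2 = Y2 * X2 := by decide +kernel
theorem Xpow2 : X2 ^ 2 = 0 := by decide +kernel
theorem Ypow2 : Y2 ^ 2 = 0 := by decide +kernel
theorem Epow2 : (X2 + Y2 + X2 * Y2) ^ 2 = 0 := by decide +kernel
theorem bas2_col : ∀ i j, bas2 X2 Y2 i j 0 = if j = i then 1 else 0 := by decide +kernel

theorem dim2 {Q : Type} [CommRing Q] [Algebra ℂ Q] (x y w : Q)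
    (hx : x ^ 2 = 0) (hy : y ^ 2 = 0) (hw : w ^ 2 = 0)
    (h : (1 + x) * (1 + y) * (1 + w) = 1)
    (top : ∀ M : Submodule ℂ Q, 1 ∈ M → (∀ q ∈ M, x * q ∈ M) → (∀ q ∈ M, y * q ∈ M) →
      (∀ q ∈ M, w * q ∈ M) → M = ⊤)
    (hom : ∀ (S : Type) [CommRing S] [Algebra ℂ S] (x' y' w' : S), x' ^ 2 = 0 → y' ^ 2 = 0 →
      w' ^ 2 = 0 → (1 + x') * (1 + y') * (1 + w') = 1 →
      ∃ f : Q →ₐ[ℂ] S, f x = x' ∧ f y = y') : Module.finrank ℂ Q = 3 := by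
  have hE := E_zero 2 x y w hw h
  have r0 : x * y = 0 := cancel_nat 2 (by norm_num) _ (by
    push_cast
    linear_combination (1) * hE - ((1)*x^0*y^0 + (2)*x^0*y^1 + (1)*x^0*y^2) * hx - ((1)*x^0*y^0 + (2)*x^1*y^0) * hy)

  have hb : ∀ i, bas2 x y i ∈ Submodule.span ℂ (Set.range (bas2 x y)) :=
    fun i => Submodule.subset_span ⟨i, rfl⟩
  have zm : ∀ (c : ℤ) {q : Q}, q ∈ Submodule.span ℂ (Set.range (bas2 x y)) →
      c • q ∈ Submodule.span ℂ (Set.range (bas2 x y)) := fun c _ hq => zsmul_mem hq c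
  have sx := span_stable (bas2 x y) x (by
    intro i
    fin_cases i
    · have e : x * (1) = ((1 : ℤ) • (x)) := by
        simp only [zsmul_eq_mul]; push_cast
        ring
      exact e ▸ (zm 1 (hb 1))
    · have e : x * (x) = 0 := by
        linear_combination (1) * hx
      exact e ▸ (Submodule.zero_mem _)
    · have e : x * (y) = 0 := by
        linear_combination (1) * r0
      exact e ▸ (Submodule.zero_mem _)
    )
  have sy := span_stable (bas2 x y) y (by
    intro i
    fin_cases i
    · have e : y * (1) = ((1 : ℤ) • (y)) := by
        simp only [zsmul_eq_mul]; push_cast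
        ring
      exact e ▸ (zm 1 (hb 2))
    · have e : y * (x) = 0 := by
        linear_combination (1) * r0
      exact e ▸ (Submodule.zero_mem _)
    · have e : y * (y) = 0 := by
        linear_combination (1) * hy
      exact e ▸ (Submodule.zero_mem _)
    )
  have htop := top _ (hb 0) sx sy (w_stable _ 2 x y w hx hy h sx sy)
  obtain ⟨S, _, _, x', y', φ, hφ, hφx, hφy⟩ := mats 3 X2 Y2 comm2
  have hx' : x' ^ 2 = 0 := hφ (by
    rw [map_pow, hφx, ← map_pow, Xpow2, map_zero, map_zero])
  have hy' : y' ^ 2 = 0 := hφ (by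
    rw [map_pow, hφy, ← map_pow, Ypow2, map_zero, map_zero])
  have hE' : (x' + y' + x' * y') ^ 2 = 0 := hφ (by
    rw [map_pow, map_add, map_add, map_mul, hφx, hφy, ← map_mul, ← map_add, ← map_add,
      ← map_pow, Epow2, map_zero, map_zero])
  obtain ⟨u, hu⟩ := exists_unit_inv 2 x' y' hx' hy'
  obtain ⟨f, hfx, hfy⟩ := hom S x' y' (u - 1) hx' hy' (w_zero 2 x' y' u hE' hu)
    (by linear_combination hu)
  refine finrank_of_bas 2 (bas2 x y) htop f φ (bas2 X2 Y2) ?_ bas2_col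
  intro i
  have := bas2_map (φ.comp f).toRingHom x y i
  have h2 := bas2_map (Int.castRingHom ℂ).mapMatrix X2 Y2 i
  rw [h2, ← hφx, ← hφy, ← hfx, ← hfy]
  exact this

def bas3 {R : Type} [Ring R] (x y : R) : Fin 7 → R :=
  ![1, x, y, x ^ 2, x * y, y ^ 2, x ^ 2 * y]

theorem bas3_map {R R' : Type} [Ring R] [Ring R'] (f : R →+* R') (x y : R) (i : Fin 7) :
    f (bas3 x y i) = bas3 (f x) (f y) i := by
  fin_cases i <;> simp [bas3]

def X3 : Matrix (Fin 7) (Fin 7) ℤ :=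
  !![0, 0, 0, 0, 0, 0, 0;
     1, 0, 0, 0, 0, 0, 0;
     0, 0, 0, 0, 0, 0, 0;
     0, 1, 0, 0, 0, 0, 0;
     0, 0, 1, 0, 0, 0, 0;
     0, 0, 0, 0, 0, 0, 0;
     0, 0, 0, 0, 1, -1, 0]

def Y3 : Matrix (Fin 7) (Fin 7) ℤ :=
  !![0, 0, 0, 0, 0, 0, 0;
     0, 0, 0, 0, 0, 0, 0;
     1, 0, 0, 0, 0, 0, 0;
     0, 0, 0, 0, 0, 0, 0;
     0, 1, 0, 0, 0, 0, 0;
     0, 0, 1, 0, 0, 0, 0;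
     0, 0, 0, 1, -1, 0, 0]

theorem comm3 : X3 * Y3 = Y3 * X3 := by decide +kernel
theorem Xpow3 : X3 ^ 3 = 0 := by decide +kernel
theorem Ypow3 : Y3 ^ 3 = 0 := by decide +kernel
theorem Epow3 : (X3 + Y3 + X3 * Y3) ^ 3 = 0 := by decide +kernel
theorem bas3_col : ∀ i j, bas3 X3 Y3 i j 0 = if j = i then 1 else 0 := by decide +kernel

theorem dim3 {Q : Type} [CommRing Q] [Algebra ℂ Q] (x y w : Q)
    (hx : x ^ 3 = 0) (hy : y ^ 3 = 0) (hw : w ^ 3 = 0)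
    (h : (1 + x) * (1 + y) * (1 + w) = 1)
    (top : ∀ M : Submodule ℂ Q, 1 ∈ M → (∀ q ∈ M, x * q ∈ M) → (∀ q ∈ M, y * q ∈ M) →
      (∀ q ∈ M, w * q ∈ M) → M = ⊤)
    (hom : ∀ (S : Type) [CommRing S] [Algebra ℂ S] (x' y' w' : S), x' ^ 3 = 0 → y' ^ 3 = 0 →
      w' ^ 3 = 0 → (1 + x') * (1 + y') * (1 + w') = 1 →
      ∃ f : Q →ₐ[ℂ] S, f x = x' ∧ f y = y') : Module.finrank ℂ Q = 7 := by
  have hE := E_zero 3 x y w hw h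
  have r0 : x ^ 2 * y ^ 2 = 0 := cancel_nat 3 (by norm_num) _ (by
    push_cast
    linear_combination (x) * hE - ((3)*x^0*y^1 + (6)*x^0*y^2 + (3)*x^0*y^3 + (1)*x^1*y^0 + (3)*x^1*y^1 + (3)*x^1*y^2 + (1)*x^1*y^3) * hx - ((1)*x^1*y^0 + (3)*x^2*y^0) * hy)
  have r1 : x ^ 2 * y + x * y ^ 2 = 0 := cancel_nat 3 (by norm_num) _ (by
    push_cast
    linear_combination (1) * hE - ((1)*x^0*y^0 + (3)*x^0*y^1 + (3)*x^0*y^2 + (1)*x^0*y^3) * hx - ((1)*x^0*y^0 + (3)*x^1*y^0 + (3)*x^2*y^0) * hy - 6 * r0)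

  have hb : ∀ i, bas3 x y i ∈ Submodule.span ℂ (Set.range (bas3 x y)) :=
    fun i => Submodule.subset_span ⟨i, rfl⟩
  have zm : ∀ (c : ℤ) {q : Q}, q ∈ Submodule.span ℂ (Set.range (bas3 x y)) →
      c • q ∈ Submodule.span ℂ (Set.range (bas3 x y)) := fun c _ hq => zsmul_mem hq c
  have sx := span_stable (bas3 x y) x (by
    intro i
    fin_cases i
    · have e : x * (1) = ((1 : ℤ) • (x)) := by
        simp only [zsmul_eq_mul]; push_cast
        ring
      exact e ▸ (zm 1 (hb 1))
    · have e : x * (x) = ((1 : ℤ) • (x ^ 2)) := by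
        simp only [zsmul_eq_mul]; push_cast
        ring
      exact e ▸ (zm 1 (hb 3))
    · have e : x * (y) = ((1 : ℤ) • (x * y)) := by
        simp only [zsmul_eq_mul]; push_cast
        ring
      exact e ▸ (zm 1 (hb 4))
    · have e : x * (x ^ 2) = 0 := by
        linear_combination (1) * hx
      exact e ▸ (Submodule.zero_mem _)
    · have e : x * (x * y) = ((1 : ℤ) • (x ^ 2 * y)) := by
        simp only [zsmul_eq_mul]; push_cast
        ring
      exact e ▸ (zm 1 (hb 6))
    · have e : x * (y ^ 2) = ((-1 : ℤ) • (x ^ 2 * y)) := by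
        simp only [zsmul_eq_mul]; push_cast
        linear_combination r1
      exact e ▸ (zm (-1) (hb 6))
    · have e : x * (x ^ 2 * y) = 0 := by
        linear_combination (y) * hx
      exact e ▸ (Submodule.zero_mem _)
    )
  have sy := span_stable (bas3 x y) y (by
    intro i
    fin_cases i
    · have e : y * (1) = ((1 : ℤ) • (y)) := by
        simp only [zsmul_eq_mul]; push_cast
        ring
      exact e ▸ (zm 1 (hb 2))
    · have e : y * (x) = ((1 : ℤ) • (x * y)) := by
        simp only [zsmul_eq_mul]; push_cast
        ring
      exact e ▸ (zm 1 (hb 4))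
    · have e : y * (y) = ((1 : ℤ) • (y ^ 2)) := by
        simp only [zsmul_eq_mul]; push_cast
        ring
      exact e ▸ (zm 1 (hb 5))
    · have e : y * (x ^ 2) = ((1 : ℤ) • (x ^ 2 * y)) := by
        simp only [zsmul_eq_mul]; push_cast
        ring
      exact e ▸ (zm 1 (hb 6))
    · have e : y * (x * y) = ((-1 : ℤ) • (x ^ 2 * y)) := by
        simp only [zsmul_eq_mul]; push_cast
        linear_combination r1
      exact e ▸ (zm (-1) (hb 6))
    · have e : y * (y ^ 2) = 0 := by
        linear_combination (1) * hy
      exact e ▸ (Submodule.zero_mem _)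
    · have e : y * (x ^ 2 * y) = 0 := by
        linear_combination r0
      exact e ▸ (Submodule.zero_mem _)
    )
  have htop := top _ (hb 0) sx sy (w_stable _ 3 x y w hx hy h sx sy)
  obtain ⟨S, _, _, x', y', φ, hφ, hφx, hφy⟩ := mats 7 X3 Y3 comm3
  have hx' : x' ^ 3 = 0 := hφ (by
    rw [map_pow, hφx, ← map_pow, Xpow3, map_zero, map_zero])
  have hy' : y' ^ 3 = 0 := hφ (by
    rw [map_pow, hφy, ← map_pow, Ypow3, map_zero, map_zero])
  have hE' : (x' + y' + x' * y') ^ 3 = 0 := hφ (by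
    rw [map_pow, map_add, map_add, map_mul, hφx, hφy, ← map_mul, ← map_add, ← map_add,
      ← map_pow, Epow3, map_zero, map_zero])
  obtain ⟨u, hu⟩ := exists_unit_inv 3 x' y' hx' hy'
  obtain ⟨f, hfx, hfy⟩ := hom S x' y' (u - 1) hx' hy' (w_zero 3 x' y' u hE' hu)
    (by linear_combination hu)
  refine finrank_of_bas 6 (bas3 x y) htop f φ (bas3 X3 Y3) ?_ bas3_col
  intro i
  have := bas3_map (φ.comp f).toRingHom x y i
  have h2 := bas3_map (Int.castRingHom ℂ).mapMatrix X3 Y3 i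
  rw [h2, ← hφx, ← hφy, ← hfx, ← hfy]
  exact this

def bas4 {R : Type} [Ring R] (x y : R) : Fin 12 → R :=
  ![1, x, y, x ^ 2, x * y, y ^ 2, x ^ 3, x ^ 2 * y, x * y ^ 2, y ^ 3, x ^ 3 * y, x ^ 2 * y ^ 2 + x * y ^ 3]

theorem bas4_map {R R' : Type} [Ring R] [Ring R'] (f : R →+* R') (x y : R) (i : Fin 12) :
    f (bas4 x y i) = bas4 (f x) (f y) i := by
  fin_cases i <;> simp [bas4]

def X4 : Matrix (Fin 12) (Fin 12) ℤ :=
  !![0, 0, 0, 0, 0, 0, 0, 0, 0, 0, 0, 0;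
     1, 0, 0, 0, 0, 0, 0, 0, 0, 0, 0, 0;
     0, 0, 0, 0, 0, 0, 0, 0, 0, 0, 0, 0;
     0, 1, 0, 0, 0, 0, 0, 0, 0, 0, 0, 0;
     0, 0, 1, 0, 0, 0, 0, 0, 0, 0, 0, 0;
     0, 0, 0, 0, 0, 0, 0, 0, 0, 0, 0, 0;
     0, 0, 0, 1, 0, 0, 0, 0, 0, 0, 0, 0;
     0, 0, 0, 0, 1, 0, 0, 0, 0, 0, 0, 0;
     0, 0, 0, 0, 0, 1, 0, 0, 0, 0, 0, 0;
     0, 0, 0, 0, 0, 0, 0, 0, 0, 0, 0, 0;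
     0, 0, 0, 0, 0, 0, 0, 1, -2, 2, 0, 0;
     0, 0, 0, 0, 0, 0, 0, 0, -2, 3, 0, 0]

def Y4 : Matrix (Fin 12) (Fin 12) ℤ :=
  !![0, 0, 0, 0, 0, 0, 0, 0, 0, 0, 0, 0;
     0, 0, 0, 0, 0, 0, 0, 0, 0, 0, 0, 0;
     1, 0, 0, 0, 0, 0, 0, 0, 0, 0, 0, 0;
     0, 0, 0, 0, 0, 0, 0, 0, 0, 0, 0, 0;
     0, 1, 0, 0, 0, 0, 0, 0, 0, 0, 0, 0;
     0, 0, 1, 0, 0, 0, 0, 0, 0, 0, 0, 0;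
     0, 0, 0, 0, 0, 0, 0, 0, 0, 0, 0, 0;
     0, 0, 0, 1, 0, 0, 0, 0, 0, 0, 0, 0;
     0, 0, 0, 0, 1, 0, 0, 0, 0, 0, 0, 0;
     0, 0, 0, 0, 0, 1, 0, 0, 0, 0, 0, 0;
     0, 0, 0, 0, 0, 0, 1, -2, 2, 0, 0, 0;
     0, 0, 0, 0, 0, 0, 0, -2, 3, 0, 0, 0]

theorem comm4 : X4 * Y4 = Y4 * X4 := by decide +kernel
theorem Xpow4 : X4 ^ 4 = 0 := by decide +kernel
theorem Ypow4 : Y4 ^ 4 = 0 := by decide +kernel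
theorem Epow4 : (X4 + Y4 + X4 * Y4) ^ 4 = 0 := by decide +kernel
theorem bas4_col : ∀ i j, bas4 X4 Y4 i j 0 = if j = i then 1 else 0 := by decide +kernel

theorem dim4 {Q : Type} [CommRing Q] [Algebra ℂ Q] (x y w : Q)
    (hx : x ^ 4 = 0) (hy : y ^ 4 = 0) (hw : w ^ 4 = 0)
    (h : (1 + x) * (1 + y) * (1 + w) = 1)
    (top : ∀ M : Submodule ℂ Q, 1 ∈ M → (∀ q ∈ M, x * q ∈ M) → (∀ q ∈ M, y * q ∈ M) →
      (∀ q ∈ M, w * q ∈ M) → M = ⊤)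
    (hom : ∀ (S : Type) [CommRing S] [Algebra ℂ S] (x' y' w' : S), x' ^ 4 = 0 → y' ^ 4 = 0 →
      w' ^ 4 = 0 → (1 + x') * (1 + y') * (1 + w') = 1 →
      ∃ f : Q →ₐ[ℂ] S, f x = x' ∧ f y = y') : Module.finrank ℂ Q = 12 := by
  have hE := E_zero 4 x y w hw h
  have r0 : x ^ 3 * y ^ 3 = 0 := cancel_nat 6 (by norm_num) _ (by
    push_cast
    linear_combination (x * y) * hE - ((4)*x^0*y^2 + (12)*x^0*y^3 + (12)*x^0*y^4 + (4)*x^0*y^5 + (1)*x^1*y^1 + (4)*x^1*y^2 + (6)*x^1*y^3 + (4)*x^1*y^4 + (1)*x^1*y^5) * hx - ((1)*x^1*y^1 + (4)*x^2*y^0 + (4)*x^2*y^1 + (12)*x^3*y^0 + (6)*x^3*y^1) * hy)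
  have rx : 6 * (x ^ 3 * y ^ 2) + 4 * (x ^ 2 * y ^ 3) = 0 := by
    linear_combination (x) * hE - ((4)*x^0*y^1 + (12)*x^0*y^2 + (12)*x^0*y^3 + (4)*x^0*y^4 + (1)*x^1*y^0 + (4)*x^1*y^1 + (6)*x^1*y^2 + (4)*x^1*y^3 + (1)*x^1*y^4) * hx - ((1)*x^1*y^0 + (4)*x^2*y^0 + (6)*x^3*y^0) * hy - 12 * r0
  have ry : 4 * (x ^ 3 * y ^ 2) + 6 * (x ^ 2 * y ^ 3) = 0 := by
    linear_combination (y) * hE - ((1)*x^0*y^1 + (4)*x^0*y^2 + (6)*x^0*y^3 + (4)*x^0*y^4 + (1)*x^0*y^5) * hx - ((1)*x^0*y^1 + (4)*x^1*y^0 + (4)*x^1*y^1 + (12)*x^2*y^0 + (6)*x^2*y^1 + (12)*x^3*y^0 + (4)*x^3*y^1) * hy - 12 * r0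
  have r1 : x ^ 3 * y ^ 2 = 0 := cancel_nat 20 (by norm_num) _ (by
    push_cast
    linear_combination 6 * rx - 4 * ry)
  have r2 : x ^ 2 * y ^ 3 = 0 := cancel_nat 20 (by norm_num) _ (by
    push_cast
    linear_combination 6 * ry - 4 * rx)
  have r3 : 2 * (x ^ 3 * y) + 3 * (x ^ 2 * y ^ 2) + 2 * (x * y ^ 3) = 0 :=
      cancel_nat 2 (by norm_num) _ (by
    push_cast
    linear_combination (1) * hE - ((1)*x^0*y^0 + (4)*x^0*y^1 + (6)*x^0*y^2 + (4)*x^0*y^3 + (1)*x^0*y^4) * hx - ((1)*x^0*y^0 + (4)*x^1*y^0 + (6)*x^2*y^0 + (4)*x^3*y^0) * hy - 12 * r1 - 12 * r2 - 12 * r0)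

  have hb : ∀ i, bas4 x y i ∈ Submodule.span ℂ (Set.range (bas4 x y)) :=
    fun i => Submodule.subset_span ⟨i, rfl⟩
  have zm : ∀ (c : ℤ) {q : Q}, q ∈ Submodule.span ℂ (Set.range (bas4 x y)) →
      c • q ∈ Submodule.span ℂ (Set.range (bas4 x y)) := fun c _ hq => zsmul_mem hq c
  have sx := span_stable (bas4 x y) x (by
    intro i
    fin_cases i
    · have e : x * (1) = ((1 : ℤ) • (x)) := by
        simp only [zsmul_eq_mul]; push_cast
        ring
      exact e ▸ (zm 1 (hb 1))
    · have e : x * (x) = ((1 : ℤ) • (x ^ 2)) := by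
        simp only [zsmul_eq_mul]; push_cast
        ring
      exact e ▸ (zm 1 (hb 3))
    · have e : x * (y) = ((1 : ℤ) • (x * y)) := by
        simp only [zsmul_eq_mul]; push_cast
        ring
      exact e ▸ (zm 1 (hb 4))
    · have e : x * (x ^ 2) = ((1 : ℤ) • (x ^ 3)) := by
        simp only [zsmul_eq_mul]; push_cast
        ring
      exact e ▸ (zm 1 (hb 6))
    · have e : x * (x * y) = ((1 : ℤ) • (x ^ 2 * y)) := by
        simp only [zsmul_eq_mul]; push_cast
        ring
      exact e ▸ (zm 1 (hb 7))
    · have e : x * (y ^ 2) = ((1 : ℤ) • (x * y ^ 2)) := by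
        simp only [zsmul_eq_mul]; push_cast
        ring
      exact e ▸ (zm 1 (hb 8))
    · have e : x * (x ^ 3) = 0 := by
        linear_combination (1) * hx
      exact e ▸ (Submodule.zero_mem _)
    · have e : x * (x ^ 2 * y) = ((1 : ℤ) • (x ^ 3 * y)) := by
        simp only [zsmul_eq_mul]; push_cast
        ring
      exact e ▸ (zm 1 (hb 10))
    · have e : x * (x * y ^ 2) = ((-2 : ℤ) • (x ^ 3 * y)) + ((-2 : ℤ) • (x ^ 2 * y ^ 2 + x * y ^ 3)) := by
        simp only [zsmul_eq_mul]; push_cast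
        linear_combination r3
      exact e ▸ (Submodule.add_mem _ (zm (-2) (hb 10)) (zm (-2) (hb 11)))
    · have e : x * (y ^ 3) = ((2 : ℤ) • (x ^ 3 * y)) + ((3 : ℤ) • (x ^ 2 * y ^ 2 + x * y ^ 3)) := by
        simp only [zsmul_eq_mul]; push_cast
        linear_combination (-r3)
      exact e ▸ (Submodule.add_mem _ (zm 2 (hb 10)) (zm 3 (hb 11)))
    · have e : x * (x ^ 3 * y) = 0 := by
        linear_combination (y) * hx
      exact e ▸ (Submodule.zero_mem _)
    · have e : x * (x ^ 2 * y ^ 2 + x * y ^ 3) = 0 := by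
        linear_combination r1 + r2
      exact e ▸ (Submodule.zero_mem _)
    )
  have sy := span_stable (bas4 x y) y (by
    intro i
    fin_cases i
    · have e : y * (1) = ((1 : ℤ) • (y)) := by
        simp only [zsmul_eq_mul]; push_cast
        ring
      exact e ▸ (zm 1 (hb 2))
    · have e : y * (x) = ((1 : ℤ) • (x * y)) := by
        simp only [zsmul_eq_mul]; push_cast
        ring
      exact e ▸ (zm 1 (hb 4))
    · have e : y * (y) = ((1 : ℤ) • (y ^ 2)) := by
        simp only [zsmul_eq_mul]; push_cast
        ring
      exact e ▸ (zm 1 (hb 5))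
    · have e : y * (x ^ 2) = ((1 : ℤ) • (x ^ 2 * y)) := by
        simp only [zsmul_eq_mul]; push_cast
        ring
      exact e ▸ (zm 1 (hb 7))
    · have e : y * (x * y) = ((1 : ℤ) • (x * y ^ 2)) := by
        simp only [zsmul_eq_mul]; push_cast
        ring
      exact e ▸ (zm 1 (hb 8))
    · have e : y * (y ^ 2) = ((1 : ℤ) • (y ^ 3)) := by
        simp only [zsmul_eq_mul]; push_cast
        ring
      exact e ▸ (zm 1 (hb 9))
    · have e : y * (x ^ 3) = ((1 : ℤ) • (x ^ 3 * y)) := by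
        simp only [zsmul_eq_mul]; push_cast
        ring
      exact e ▸ (zm 1 (hb 10))
    · have e : y * (x ^ 2 * y) = ((-2 : ℤ) • (x ^ 3 * y)) + ((-2 : ℤ) • (x ^ 2 * y ^ 2 + x * y ^ 3)) := by
        simp only [zsmul_eq_mul]; push_cast
        linear_combination r3
      exact e ▸ (Submodule.add_mem _ (zm (-2) (hb 10)) (zm (-2) (hb 11)))
    · have e : y * (x * y ^ 2) = ((2 : ℤ) • (x ^ 3 * y)) + ((3 : ℤ) • (x ^ 2 * y ^ 2 + x * y ^ 3)) := by
        simp only [zsmul_eq_mul]; push_cast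
        linear_combination (-r3)
      exact e ▸ (Submodule.add_mem _ (zm 2 (hb 10)) (zm 3 (hb 11)))
    · have e : y * (y ^ 3) = 0 := by
        linear_combination (1) * hy
      exact e ▸ (Submodule.zero_mem _)
    · have e : y * (x ^ 3 * y) = 0 := by
        linear_combination r1
      exact e ▸ (Submodule.zero_mem _)
    · have e : y * (x ^ 2 * y ^ 2 + x * y ^ 3) = 0 := by
        linear_combination r2 + (x) * hy
      exact e ▸ (Submodule.zero_mem _)
    )
  have htop := top _ (hb 0) sx sy (w_stable _ 4 x y w hx hy h sx sy)
  obtain ⟨S, _, _, x', y', φ, hφ, hφx, hφy⟩ := mats 12 X4 Y4 comm4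
  have hx' : x' ^ 4 = 0 := hφ (by
    rw [map_pow, hφx, ← map_pow, Xpow4, map_zero, map_zero])
  have hy' : y' ^ 4 = 0 := hφ (by
    rw [map_pow, hφy, ← map_pow, Ypow4, map_zero, map_zero])
  have hE' : (x' + y' + x' * y') ^ 4 = 0 := hφ (by
    rw [map_pow, map_add, map_add, map_mul, hφx, hφy, ← map_mul, ← map_add, ← map_add,
      ← map_pow, Epow4, map_zero, map_zero])
  obtain ⟨u, hu⟩ := exists_unit_inv 4 x' y' hx' hy'
  obtain ⟨f, hfx, hfy⟩ := hom S x' y' (u - 1) hx' hy' (w_zero 4 x' y' u hE' hu)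
    (by linear_combination hu)
  refine finrank_of_bas 11 (bas4 x y) htop f φ (bas4 X4 Y4) ?_ bas4_col
  intro i
  have := bas4_map (φ.comp f).toRingHom x y i
  have h2 := bas4_map (Int.castRingHom ℂ).mapMatrix X4 Y4 i
  rw [h2, ← hφx, ← hφy, ← hfx, ← hfy]
  exact this

theorem final (z : ℂ) (m d : ℕ) (hz3 : z ^ 3 = 1)
    (H : ∀ {Q : Type} [CommRing Q] [Algebra ℂ Q] (x y w : Q)
    (_ : x ^ m = 0) (_ : y ^ m = 0) (_ : w ^ m = 0)
    (_ : (1 + x) * (1 + y) * (1 + w) = 1)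
    (_ : ∀ M : Submodule ℂ Q, 1 ∈ M → (∀ q ∈ M, x * q ∈ M) → (∀ q ∈ M, y * q ∈ M) →
      (∀ q ∈ M, w * q ∈ M) → M = ⊤)
    (_ : ∀ (S : Type) [CommRing S] [Algebra ℂ S] (x' y' w' : S), x' ^ m = 0 → y' ^ m = 0 →
      w' ^ m = 0 → (1 + x') * (1 + y') * (1 + w') = 1 →
      ∃ f : Q →ₐ[ℂ] S, f x = x' ∧ f y = y'), Module.finrank ℂ Q = d) :
    Module.finrank ℂ (Vq z m) = d := by
  have hz : z ≠ 0 := by rintro rfl; norm_num at hz3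
  have ht := cls_T z m hz
  have hn := nil_pow z m
  rw [finrank_Vq, finrank_hol]
  refine H (i1 _ (nil z m)) (i2 _ (nil z m)) (i3 _ (nil z m)) ?_ ?_ ?_
    (rel _ z _ hz3 ht) ?_ ?_
  · rw [← map_pow, hn, map_zero]
  · rw [← map_pow, hn, map_zero]
  · rw [← map_pow, hn, map_zero]
  · exact fun M h0 h1 h2 h3 => eq_top _ z _ hz3 ht (gen z m hz) M h0 h1 h2 h3
  · intro S _ _ x' y' w' hx hy hw h
    exact exists_hom _ z _ hz3 ht m (univ z m hz) x' y' w' hx hy hw h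

theorem stmt18 (z : ℂ) (hz3 : z ^ 3 = 1) (hz1 : z ≠ 1) :
    Module.finrank ℂ (Vq z 2) = 3 ∧ Module.finrank ℂ (Vq z 3) = 7 ∧
      Module.finrank ℂ (Vq z 4) = 12 :=
  ⟨final z 2 3 hz3 dim2, final z 3 7 hz3 dim3, final z 4 12 hz3 dim4⟩
end
end
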